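/- Fix an integer n ≥ 4. Let g : ℝ^{n−1}×ℝ^{n−1} → ℝ be g(x, y) = x₁ − y₁ + (x_{n−1}+y_{n−1})²(x_{n−1}−y_{n−1})/4, and let M = {(x, y) : g(x, y) = 0 and x_i = y_i for 2 ≤ i ≤ n−2}. Define the twisted conormal bundle N*M' = {((x, ξ), (y, η)) : (x, y) ∈ M and there exist λ, μ₂, …, μ_{n−2} ∈ ℝ with ξ = λ∇_x g(x, y) + Σ_{i=2}^{n−2} μ_i e_i and −η = λ∇_y g(x, y) − Σ_{i=2}^{n−2} μ_i e_i}. Then N*M' equals the set C̃₀ of all ((x, ξ), (y, η)) with x_i = y_i for 2 ≤ i ≤ n−2, ξ_i = η_i for 1 ≤ i ≤ n−2, ξ_{n−1} = (x_{n−1}+y_{n−1})(3x_{n−1}−y_{n−1})ξ₁/4, η_{n−1} = (x_{n−1}+y_{n−1})(3y_{n−1}−x_{n−1})ξ₁/4, and g(x, y) = 0. -/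

import Mathlib

/-- The defining function
`g(x, y) = x₁ - y₁ + (x_{n-1}+y_{n-1})²(x_{n-1}-y_{n-1})/4` on `ℝ^{n-1} × ℝ^{n-1}`
(indices shifted down by one: `x₁ = x 0`, `x_{n-1} = x ⟨n-2⟩`). -/
noncomputable def gdef (n : ℕ) (hn : 4 ≤ n)
    (q : (Fin (n - 1) → ℝ) × (Fin (n - 1) → ℝ)) : ℝ :=
  q.1 ⟨0, by omega⟩ - q.2 ⟨0, by omega⟩ +
    (q.1 ⟨n - 2, by omega⟩ + q.2 ⟨n - 2, by omega⟩) ^ 2 *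
      (q.1 ⟨n - 2, by omega⟩ - q.2 ⟨n - 2, by omega⟩) / 4

/-- The gradient `∇_x g` of `g` in the `x` variables. -/
noncomputable def gradx (n : ℕ) (hn : 4 ≤ n)
    (q : (Fin (n - 1) → ℝ) × (Fin (n - 1) → ℝ)) : Fin (n - 1) → ℝ :=
  fun i => fderiv ℝ (gdef n hn) q (Pi.single i 1, 0)

/-- The gradient `∇_y g` of `g` in the `y` variables. -/
noncomputable def grady (n : ℕ) (hn : 4 ≤ n)
    (q : (Fin (n - 1) → ℝ) × (Fin (n - 1) → ℝ)) : Fin (n - 1) → ℝ :=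
  fun i => fderiv ℝ (gdef n hn) q (0, Pi.single i 1)

/-!
Write `a = ∇_x g` and `b = ∇_y g`. Adding `ξ = λa + Σ μᵢeᵢ` and `-η = λb - Σ μᵢeᵢ` eliminates
the `μᵢ`: the fibre condition says `ξ - η = λ(a + b)` together with `ξ - λa ∈ span (eᵢ)`. Here `g`
is `x₁ - y₁` plus a function of the last coordinates, so `a + b` is supported at the last index,
whence `ξ` and `η` agree at all the others. The span of the `eᵢ` is cut out by the vanishing of the
first and last coordinates: the first one gives `λ = ξ₁`, and the last coordinates of `ξ` and `η`
are then `∂g/∂x_{n-1}` and `-∂g/∂y_{n-1}` times `ξ₁`.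
-/

/-- The covector pair `(ξ, η)` lies in a fibre of a twisted conormal bundle: `(ξ, -η)` is in the
span of `(a, b)` and the `(e i, -e i)`, which stand for the differentials of `g` and the
`x_i - y_i`, the functions cutting out the submanifold. -/
def IsTwistedConormal (R : Type*) {V κ : Type*} [Ring R] [AddCommGroup V] [Module R V] [Fintype κ]
    (a b : V) (e : κ → V) (ξ η : V) : Prop :=
  ∃ lam : R, ∃ μ : κ → R, ξ = lam • a + ∑ i, μ i • e i ∧ -η = lam • b - ∑ i, μ i • e i

theorem isTwistedConormal_iff_exists_sub_eq_smul_add {R V κ : Type*} [Ring R] [AddCommGroup V]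
    [Module R V] [Fintype κ] {a b : V} {e : κ → V} {ξ η : V} :
    IsTwistedConormal R a b e ξ η ↔
      ∃ lam : R, ξ - η = lam • (a + b) ∧ ξ - lam • a ∈ Submodule.span R (Set.range e) := by
  simp only [IsTwistedConormal, Submodule.mem_span_range_iff_exists_fun, ← exists_and_left]
  refine exists_congr fun lam => exists_congr fun μ => ?_
  generalize ∑ i, μ i • e i = s
  rw [smul_add]
  constructor
  · rintro ⟨rfl, hη⟩
    exact ⟨by rw [sub_eq_add_neg, hη]; abel, by abel⟩
  · rintro ⟨hsub, rfl⟩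
    exact ⟨by abel, by rw [← sub_sub_cancel ξ η, hsub]; abel⟩

theorem mem_span_range_single_one_iff {R ι κ : Type*} [Semiring R] [Finite ι] [DecidableEq ι]
    {f : κ → ι} {u : ι → R} :
    u ∈ Submodule.span R (Set.range fun i => Pi.single (f i) (1 : R)) ↔
      ∀ j ∉ Set.range f, u j = 0 := by
  have hrange : (Set.range fun i => Pi.single (f i) (1 : R)) =
      Pi.basisFun R ι '' Set.range f := by
    simp only [← Set.range_comp, Function.comp_def, Pi.basisFun_apply]
  rw [hrange, Module.Basis.mem_span_image]
  simp only [Set.subset_def, Finset.mem_coe, Finsupp.mem_support_iff, Pi.basisFun_repr]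
  exact forall_congr' fun j => not_imp_comm

theorem isTwistedConormal_single_iff {R ι κ : Type*} [CommRing R] [Finite ι] [DecidableEq ι]
    [Fintype κ] {p l : ι} (hpl : p ≠ l) {f : κ → ι} (hf : Set.range f = {p, l}ᶜ) {α β : R}
    {ξ η : ι → R} :
    IsTwistedConormal R (Pi.single p 1 + Pi.single l α) (Pi.single l β - Pi.single p 1)
        (fun i => Pi.single (f i) 1) ξ η ↔
      (∀ j ≠ l, ξ j = η j) ∧ ξ l = α * ξ p ∧ η l = -β * ξ p := by
  have hsum : Pi.single p 1 + Pi.single l α + (Pi.single l β - Pi.single p 1) =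
      (Pi.single l (α + β) : ι → R) := by
    rw [Pi.single_add]
    abel
  have hvanish (lam : R) :
      (∀ j ∉ Set.range f, (ξ - lam • (Pi.single p 1 + Pi.single l α : ι → R)) j = 0) ↔
        ξ p = lam ∧ ξ l = lam * α := by
    simp only [hf, Set.notMem_compl_iff, Set.mem_insert_iff, Set.mem_singleton_iff,
      forall_eq_or_imp, forall_eq]
    simp [hpl, hpl.symm, sub_eq_zero]
  have hdiff (lam : R) : ξ - η = lam • (Pi.single l (α + β) : ι → R) ↔
      (∀ j ≠ l, ξ j = η j) ∧ ξ l - η l = lam * (α + β) := by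
    rw [← Pi.single_smul, Pi.single, Function.eq_update_iff, and_comm]
    simp only [Pi.sub_apply, Pi.zero_apply, sub_eq_zero, smul_eq_mul]
  simp only [isTwistedConormal_iff_exists_sub_eq_smul_add, mem_span_range_single_one_iff, hsum,
    hvanish, hdiff]
  constructor
  · rintro ⟨_, ⟨heq, hl⟩, rfl, hξl⟩
    exact ⟨heq, by rw [hξl, mul_comm], by linear_combination hξl - hl⟩
  · rintro ⟨heq, hξl, hηl⟩
    exact ⟨ξ p, ⟨heq, by linear_combination hξl - hηl⟩, rfl, by rw [hξl, mul_comm]⟩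

theorem fderiv_gdef_apply (n : ℕ) (hn : 4 ≤ n) (q v : (Fin (n - 1) → ℝ) × (Fin (n - 1) → ℝ)) :
    fderiv ℝ (gdef n hn) q v =
      v.1 ⟨0, by omega⟩ - v.2 ⟨0, by omega⟩ +
        (q.1 ⟨n - 2, by omega⟩ + q.2 ⟨n - 2, by omega⟩) *
          ((3 * q.1 ⟨n - 2, by omega⟩ - q.2 ⟨n - 2, by omega⟩) * v.1 ⟨n - 2, by omega⟩ +
            (q.1 ⟨n - 2, by omega⟩ - 3 * q.2 ⟨n - 2, by omega⟩) * v.2 ⟨n - 2, by omega⟩) / 4 := by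
  have hx (i : Fin (n - 1)) :=
    (hasFDerivAt_apply (𝕜 := ℝ) i q.1).comp q hasFDerivAt_fst
  have hy (i : Fin (n - 1)) :=
    (hasFDerivAt_apply (𝕜 := ℝ) i q.2).comp q hasFDerivAt_snd
  have hg : HasFDerivAt (gdef n hn) _ q :=
    ((hx ⟨0, by omega⟩).sub (hy ⟨0, by omega⟩)).add
      (((((hx ⟨n - 2, by omega⟩).add (hy ⟨n - 2, by omega⟩)).pow 2).mul
        ((hx ⟨n - 2, by omega⟩).sub (hy ⟨n - 2, by omega⟩))).mul_const (4⁻¹ : ℝ))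
  rw [hg.fderiv]
  simp only [Pi.add_apply, Function.comp_apply, Pi.sub_apply, Nat.add_one_sub_one, pow_one,
    smul_add, nsmul_eq_mul, Nat.cast_ofNat, add_apply, sub_apply, smul_apply, smul_eq_mul,
    ContinuousLinearMap.comp_apply, ContinuousLinearMap.coe_fst', ContinuousLinearMap.coe_snd',
    ContinuousLinearMap.proj_apply]
  ring

theorem gradx_eq_single_add_single (n : ℕ) (hn : 4 ≤ n) (x y : Fin (n - 1) → ℝ) :
    gradx n hn (x, y) = Pi.single ⟨0, by omega⟩ 1 + Pi.single ⟨n - 2, by omega⟩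
      ((x ⟨n - 2, by omega⟩ + y ⟨n - 2, by omega⟩) *
        (3 * x ⟨n - 2, by omega⟩ - y ⟨n - 2, by omega⟩) / 4) := by
  ext j
  simp only [gradx, fderiv_gdef_apply, Pi.add_apply, Pi.zero_apply, Pi.single_apply,
    eq_comm (a := j)]
  split_ifs <;> ring

theorem grady_eq_single_sub_single (n : ℕ) (hn : 4 ≤ n) (x y : Fin (n - 1) → ℝ) :
    grady n hn (x, y) = Pi.single ⟨n - 2, by omega⟩
      ((x ⟨n - 2, by omega⟩ + y ⟨n - 2, by omega⟩) *
        (x ⟨n - 2, by omega⟩ - 3 * y ⟨n - 2, by omega⟩) / 4) - Pi.single ⟨0, by omega⟩ 1 := by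
  ext j
  simp only [grady, fderiv_gdef_apply, Pi.sub_apply, Pi.zero_apply, Pi.single_apply,
    eq_comm (a := j)]
  split_ifs <;> ring

/-- The (zero-based) indices `1, …, n-3` of the coordinates on which `g` does not depend, as a
map into the index set `{0, …, n-2}` of all coordinates. -/
def middleIndex (n : ℕ) (i : Fin (n - 3)) : Fin (n - 1) :=
  ⟨i + 1, by omega⟩

theorem range_middleIndex {n : ℕ} (hn : 2 ≤ n) :
    Set.range (middleIndex n) = {⟨0, by omega⟩, ⟨n - 2, by omega⟩}ᶜ := by
  ext j
  simp only [middleIndex, Set.mem_range, Set.mem_compl_iff, Set.mem_insert_iff,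
    Set.mem_singleton_iff, Fin.ext_iff]
  constructor
  · rintro ⟨i, hi⟩
    omega
  · intro hj
    exact ⟨⟨j - 1, by omega⟩, by simp only; omega⟩

theorem forall_ne_last_iff {m k : ℕ} (hk : k = m + 1) {P : Fin k → Prop} :
    (∀ j ≠ ⟨m, by omega⟩, P j) ↔ ∀ i : Fin m, P ⟨i, by omega⟩ := by
  subst hk
  constructor
  · exact fun h i => h _ (Fin.castSucc_lt_last i).ne
  · intro h j hj
    exact h ⟨j, Fin.val_lt_last hj⟩

theorem isTwistedConormal_grad_iff (n : ℕ) (hn : 4 ≤ n) (x y ξ η : Fin (n - 1) → ℝ) :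
    IsTwistedConormal ℝ (gradx n hn (x, y)) (grady n hn (x, y))
        (fun i => Pi.single (middleIndex n i) 1) ξ η ↔
      (∀ i : Fin (n - 2), ξ ⟨i, by omega⟩ = η ⟨i, by omega⟩) ∧
      ξ ⟨n - 2, by omega⟩ =
        (x ⟨n - 2, by omega⟩ + y ⟨n - 2, by omega⟩) *
          (3 * x ⟨n - 2, by omega⟩ - y ⟨n - 2, by omega⟩) * ξ ⟨0, by omega⟩ / 4 ∧
      η ⟨n - 2, by omega⟩ =
        (x ⟨n - 2, by omega⟩ + y ⟨n - 2, by omega⟩) *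
          (3 * y ⟨n - 2, by omega⟩ - x ⟨n - 2, by omega⟩) * ξ ⟨0, by omega⟩ / 4 := by
  have hne : (⟨0, by omega⟩ : Fin (n - 1)) ≠ ⟨n - 2, by omega⟩ := by
    simp only [ne_eq, Fin.mk.injEq]
    omega
  rw [gradx_eq_single_add_single, grady_eq_single_sub_single,
    isTwistedConormal_single_iff hne (range_middleIndex (by omega)),
    forall_ne_last_iff (by omega : n - 1 = n - 2 + 1)]
  ring_nf

/-- the twisted conormal bundle `N*M'` of
`M = {g = 0, x_i = y_i (2 ≤ i ≤ n-2)}`, where the fiber covectors are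
`ξ = λ∇_x g + Σ μ_i e_i` and `-η = λ∇_y g - Σ μ_i e_i` (the sums running over
`2 ≤ i ≤ n-2`, i.e. over the shifted indices `1, …, n-3`), equals the set `C̃₀` of all
`((x, ξ), (y, η))` with `x_i = y_i (2 ≤ i ≤ n-2)`, `ξ_i = η_i (1 ≤ i ≤ n-2)`,
`ξ_{n-1} = (x_{n-1}+y_{n-1})(3x_{n-1}-y_{n-1})ξ₁/4`,
`η_{n-1} = (x_{n-1}+y_{n-1})(3y_{n-1}-x_{n-1})ξ₁/4`, and `g(x, y) = 0`. -/
theorem stmt_18 (n : ℕ) (hn : 4 ≤ n) :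
    {w : ((Fin (n - 1) → ℝ) × (Fin (n - 1) → ℝ)) ×
        ((Fin (n - 1) → ℝ) × (Fin (n - 1) → ℝ)) |
      (gdef n hn (w.1.1, w.2.1) = 0 ∧
        (∀ i : ℕ, ∀ h1 : 1 ≤ i, ∀ h2 : i ≤ n - 3,
          w.1.1 ⟨i, by omega⟩ = w.2.1 ⟨i, by omega⟩)) ∧
      ∃ lam : ℝ, ∃ μ : Fin (n - 3) → ℝ,
        w.1.2 = lam • gradx n hn (w.1.1, w.2.1) +
            ∑ i : Fin (n - 3), μ i •
              (Pi.single (⟨(i : ℕ) + 1, by have := i.isLt; omega⟩ : Fin (n - 1)) 1 :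
                Fin (n - 1) → ℝ) ∧
        -w.2.2 = lam • grady n hn (w.1.1, w.2.1) -
            ∑ i : Fin (n - 3), μ i •
              (Pi.single (⟨(i : ℕ) + 1, by have := i.isLt; omega⟩ : Fin (n - 1)) 1 :
                Fin (n - 1) → ℝ)} =
    {w | (∀ i : ℕ, ∀ h1 : 1 ≤ i, ∀ h2 : i ≤ n - 3,
          w.1.1 ⟨i, by omega⟩ = w.2.1 ⟨i, by omega⟩) ∧
      (∀ i : Fin (n - 2), w.1.2 ⟨(i : ℕ), by have := i.isLt; omega⟩ =
          w.2.2 ⟨(i : ℕ), by have := i.isLt; omega⟩) ∧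
      w.1.2 ⟨n - 2, by omega⟩ =
        (w.1.1 ⟨n - 2, by omega⟩ + w.2.1 ⟨n - 2, by omega⟩) *
          (3 * w.1.1 ⟨n - 2, by omega⟩ - w.2.1 ⟨n - 2, by omega⟩) *
            w.1.2 ⟨0, by omega⟩ / 4 ∧
      w.2.2 ⟨n - 2, by omega⟩ =
        (w.1.1 ⟨n - 2, by omega⟩ + w.2.1 ⟨n - 2, by omega⟩) *
          (3 * w.2.1 ⟨n - 2, by omega⟩ - w.1.1 ⟨n - 2, by omega⟩) *
            w.1.2 ⟨0, by omega⟩ / 4 ∧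
      gdef n hn (w.1.1, w.2.1) = 0} := by
  ext ⟨⟨x, ξ⟩, ⟨y, η⟩⟩
  have hfibre := isTwistedConormal_grad_iff n hn x y ξ η
  constructor
  · rintro ⟨⟨hg, hxy⟩, hconormal⟩
    obtain ⟨hξη, hξ, hη⟩ := hfibre.1 hconormal
    exact ⟨hxy, hξη, hξ, hη, hg⟩
  · rintro ⟨hxy, hξη, hξ, hη, hg⟩
    exact ⟨⟨hg, hxy⟩, hfibre.2 ⟨hξη, hξ, hη⟩⟩
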